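/- arXiv:1705.04118 — 3 statements merged into one kernel-verified Lean document; each statement's English description precedes it below -/
import Mathlib

section
/- The coalitional optimal cost is subadditive over disjoint coalitions: if G1 and G2 are disjoint finite sets of households, then c^ResEss(G1 ∪ G2) ≤ c^ResEss(G1) + c^ResEss(G2). Consequently the coalitional game worth υ is superadditive: υ(G1 ∪ G2) ≥ υ(G1) + υ(G2) for disjoint G1, G2. (Concatenating a coalitionally feasible point of G1 with one of G2 yields a coalitionally feasible point of G1 ∪ G2 whose objective is the sum of the two objectives.) -/
open Finset

/-- Storage recursion: `s 0 = (1-η)·s0 + r 0` and `s t = (1-η)·s (t-1) + r t` for `t ≥ 1`. -/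
def StorageRec {T : ℕ} (η s0 : ℝ) (r s : Fin T → ℝ) : Prop :=
  ∀ t : Fin T,
    s t = (1 - η) * (if _h : (t : ℕ) = 0 then s0
      else s ⟨(t : ℕ) - 1, lt_of_le_of_lt (Nat.sub_le _ _) t.isLt⟩) + r t

/-- Individual feasibility of a triple `(b, r, s)` for household data `(u, w, C, ρ, η, s0)`. -/
def IndivFeasible {T : ℕ} (u w : Fin T → ℝ) (C ρ η s0 : ℝ)
    (b r s : Fin T → ℝ) : Prop :=
  (∀ t, u t - w t - b t + r t ≤ 0) ∧
  (∀ t, 0 ≤ b t) ∧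
  (∀ t, |r t| ≤ ρ) ∧
  StorageRec η s0 r s ∧
  (∀ t, 0 ≤ s t ∧ s t ≤ C)

/-- The individual objective `F(b, r)`. -/
noncomputable def indivObj {T : ℕ} (ξ u w : Fin T → ℝ) (π σ : ℝ)
    (b r : Fin T → ℝ) : ℝ :=
  ∑ t, ξ t * b t + π * ∑ t, |r t| + σ * ∑ t, (b t + w t - u t - r t)

/-- The individual optimal cost: infimum of `F` over individually feasible triples. -/
noncomputable def indivCost {T : ℕ} (ξ u w : Fin T → ℝ) (π σ C ρ η s0 : ℝ) : ℝ :=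
  sInf {c : ℝ | ∃ b r s : Fin T → ℝ,
    IndivFeasible u w C ρ η s0 b r s ∧ indivObj ξ u w π σ b r = c}

/-- Coalitional feasibility for a finite set `G` of households. -/
def CoalFeasible {ι : Type*} {T : ℕ} (u w : ι → Fin T → ℝ) (C ρ η s0 : ι → ℝ)
    (G : Finset ι) (b r s a : ι → Fin T → ℝ) : Prop :=
  (∀ g ∈ G, ∀ t, 0 ≤ b g t) ∧
  (∀ g ∈ G, ∀ t, |r g t| ≤ ρ g) ∧
  (∀ g ∈ G, StorageRec (η g) (s0 g) (r g) (s g)) ∧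
  (∀ g ∈ G, ∀ t, 0 ≤ s g t ∧ s g t ≤ C g) ∧
  (∀ g ∈ G, ∀ t, u g t - w g t - b g t + r g t + a g t ≤ 0) ∧
  (∀ t, ∑ g ∈ G, a g t = 0)

/-- The coalitional objective `F_G`. -/
noncomputable def coalObj {ι : Type*} {T : ℕ} (ξ : Fin T → ℝ) (u w : ι → Fin T → ℝ)
    (π σ τ : ℝ) (G : Finset ι) (b r a : ι → Fin T → ℝ) : ℝ :=
  ∑ g ∈ G, (∑ t, ξ t * b g t + π * ∑ t, |r g t| + τ * ∑ t, |a g t|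
    + σ * ∑ t, (b g t + w g t - u g t - a g t - r g t))

/-- The coalitional optimal cost `c^ResEss(G)`: infimum of `F_G` over coalitionally
feasible points. -/
noncomputable def coalCost {ι : Type*} {T : ℕ} (ξ : Fin T → ℝ) (u w : ι → Fin T → ℝ)
    (C ρ η s0 : ι → ℝ) (π σ τ : ℝ) (G : Finset ι) : ℝ :=
  sInf {c : ℝ | ∃ b r s a : ι → Fin T → ℝ,
    CoalFeasible u w C ρ η s0 G b r s a ∧ coalObj ξ u w π σ τ G b r a = c}

theorem coalSet_nonempty_aux {ι : Type*} {T : ℕ}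
    (ξ : Fin T → ℝ) (u w : ι → Fin T → ℝ) (C ρ η s0 : ι → ℝ) (π σ τ : ℝ)
    (hu : ∀ g t, 0 ≤ u g t) (hw : ∀ g t, 0 ≤ w g t) (hρ : ∀ g, 0 ≤ ρ g)
    (hη0 : ∀ g, 0 ≤ η g) (hη1 : ∀ g, η g ≤ 1)
    (hs00 : ∀ g, 0 ≤ s0 g) (hs0C : ∀ g, s0 g ≤ C g) (G : Finset ι) :
    {c : ℝ | ∃ b r s a : ι → Fin T → ℝ,
    CoalFeasible u w C ρ η s0 G b r s a ∧ coalObj ξ u w π σ τ G b r a = c}.Nonempty := by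
  refine ⟨_, u, fun _ _ => 0, fun g t => (1 - η g) ^ ((t : ℕ) + 1) * s0 g, fun _ _ => 0,
    ⟨fun g _ t => hu g t, fun g _ t => by simpa using hρ g, ?_, ?_, ?_, ?_⟩, rfl⟩
  · intro g _ t
    rcases t with ⟨t, ht⟩
    cases t with
    | zero => simp
    | succ n => simp; ring
  · intro g _ t
    have h0 : 0 ≤ 1 - η g := by linarith [hη1 g]
    have h1 : 1 - η g ≤ 1 := by linarith [hη0 g]
    have h2 : (1 - η g) ^ ((t : ℕ) + 1) ≤ 1 := pow_le_one₀ h0 h1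
    have h3 : 0 ≤ (1 - η g) ^ ((t : ℕ) + 1) := pow_nonneg h0 _
    refine ⟨mul_nonneg h3 (hs00 g), ?_⟩
    exact (mul_le_of_le_one_left (hs00 g) h2).trans (hs0C g)
  · intro g _ t
    simp only
    linarith [hw g t]
  · intro t; simp

theorem coalSet_bddBelow_aux {ι : Type*} {T : ℕ}
    (ξ : Fin T → ℝ) (u w : ι → Fin T → ℝ) (C ρ η s0 : ι → ℝ) (π σ τ : ℝ)
    (hξ : ∀ t, 0 ≤ ξ t) (hπ : 0 ≤ π) (hσ : 0 ≤ σ) (hτ : 0 ≤ τ) (G : Finset ι) :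
    BddBelow {c : ℝ | ∃ b r s a : ι → Fin T → ℝ,
    CoalFeasible u w C ρ η s0 G b r s a ∧ coalObj ξ u w π σ τ G b r a = c} := by
  refine ⟨0, ?_⟩
  rintro c ⟨b, r, s, a, ⟨hb, -, -, -, hd, -⟩, rfl⟩
  refine Finset.sum_nonneg fun g hg => ?_
  have h1 : 0 ≤ ∑ t, ξ t * b g t := Finset.sum_nonneg fun t _ => mul_nonneg (hξ t) (hb g hg t)
  have h2 : 0 ≤ π * ∑ t, |r g t| := mul_nonneg hπ (Finset.sum_nonneg fun t _ => abs_nonneg _)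
  have h3 : 0 ≤ τ * ∑ t, |a g t| := mul_nonneg hτ (Finset.sum_nonneg fun t _ => abs_nonneg _)
  have h4 : 0 ≤ σ * ∑ t, (b g t + w g t - u g t - a g t - r g t) :=
    mul_nonneg hσ (Finset.sum_nonneg fun t _ => by linarith [hd g hg t])
  linarith

/-- The coalitional optimal cost is subadditive over disjoint coalitions, and hence
the worth `υ(G) = Σ_{g∈G} indivCost g − c^ResEss(G)` is superadditive. -/
theorem coalCost_subadditive_and_worth_superadditive {ι : Type*} [DecidableEq ι] {T : ℕ} (hT : 1 ≤ T)
    (ξ : Fin T → ℝ) (u w : ι → Fin T → ℝ) (C ρ η s0 : ι → ℝ) (π σ τ : ℝ)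
    (hu : ∀ g t, 0 ≤ u g t) (hw : ∀ g t, 0 ≤ w g t)
    (hC : ∀ g, 0 ≤ C g) (hρ : ∀ g, 0 ≤ ρ g)
    (hη0 : ∀ g, 0 ≤ η g) (hη1 : ∀ g, η g ≤ 1)
    (hs00 : ∀ g, 0 ≤ s0 g) (hs0C : ∀ g, s0 g ≤ C g)
    (hξ : ∀ t, 0 ≤ ξ t) (hπ : 0 ≤ π) (hσ : 0 ≤ σ) (hτ : 0 ≤ τ)
    (G₁ G₂ : Finset ι) (hdisj : Disjoint G₁ G₂) :
    coalCost ξ u w C ρ η s0 π σ τ (G₁ ∪ G₂) ≤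
      coalCost ξ u w C ρ η s0 π σ τ G₁ + coalCost ξ u w C ρ η s0 π σ τ G₂ ∧
    ((∑ g ∈ G₁, indivCost ξ (u g) (w g) π σ (C g) (ρ g) (η g) (s0 g)) -
        coalCost ξ u w C ρ η s0 π σ τ G₁) +
      ((∑ g ∈ G₂, indivCost ξ (u g) (w g) π σ (C g) (ρ g) (η g) (s0 g)) -
        coalCost ξ u w C ρ η s0 π σ τ G₂) ≤
    (∑ g ∈ G₁ ∪ G₂, indivCost ξ (u g) (w g) π σ (C g) (ρ g) (η g) (s0 g)) -
      coalCost ξ u w C ρ η s0 π σ τ (G₁ ∪ G₂) := by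
  have key : coalCost ξ u w C ρ η s0 π σ τ (G₁ ∪ G₂) ≤
      coalCost ξ u w C ρ η s0 π σ τ G₁ + coalCost ξ u w C ρ η s0 π σ τ G₂ := by
    have ne := coalSet_nonempty_aux ξ u w C ρ η s0 π σ τ hu hw hρ hη0 hη1 hs00 hs0C
    rw [← sub_le_iff_le_add]
    refine le_csInf (ne G₁) ?_
    rintro _ ⟨b, r, s, a, ⟨f1, f2, f3, f4, f5, f6⟩, rfl⟩
    rw [sub_le_comm]
    refine le_csInf (ne G₂) ?_
    rintro _ ⟨b', r', s', a', ⟨e1, e2, e3, e4, e5, e6⟩, rfl⟩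
    rw [sub_le_iff_le_add']
    have hn : ∀ g ∈ G₂, g ∉ G₁ := fun g h2 h1 => Finset.disjoint_left.mp hdisj h1 h2
    refine csInf_le (coalSet_bddBelow_aux ξ u w C ρ η s0 π σ τ hξ hπ hσ hτ _)
      ⟨fun g => if g ∈ G₁ then b g else b' g, fun g => if g ∈ G₁ then r g else r' g,
       fun g => if g ∈ G₁ then s g else s' g, fun g => if g ∈ G₁ then a g else a' g,
       ⟨?_, ?_, ?_, ?_, ?_, ?_⟩, ?_⟩
    iterate 5
      · intro g hg
        by_cases h : g ∈ G₁
        · simp only [if_pos h]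
          first
          | exact f1 g h
          | exact f2 g h
          | exact f3 g h
          | exact f4 g h
          | exact f5 g h
        · have h2 : g ∈ G₂ := (Finset.mem_union.mp hg).resolve_left h
          simp only [if_neg h]
          first
          | exact e1 g h2
          | exact e2 g h2
          | exact e3 g h2
          | exact e4 g h2
          | exact e5 g h2
    · intro t
      rw [Finset.sum_union hdisj, ← add_zero (0 : ℝ)]
      congr 1
      · rw [← f6 t]
        exact Finset.sum_congr rfl fun g hg => by simp only [if_pos hg]
      · rw [← e6 t]
        exact Finset.sum_congr rfl fun g hg => by simp only [if_neg (hn g hg)]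
    · unfold coalObj
      rw [Finset.sum_union hdisj]
      congr 1
      · exact Finset.sum_congr rfl fun g hg => by simp only [if_pos hg]
      · exact Finset.sum_congr rfl fun g hg => by simp only [if_neg (hn g hg)]
  refine ⟨key, ?_⟩
  rw [Finset.sum_union hdisj]
  linarith
end

section
/- If the utility prices are strictly positive, ξ(t) > 0 for all t, then the individual cost minimization problem attains its minimum: there exists an individually feasible triple (b*, r*, s*) such that F(b*, r*) ≤ F(b, r) for every individually feasible triple (b, r, s). -/
open Finset

/-- With strictly positive utility prices, the individual cost minimization problem
attains its minimum. -/
theorem indiv_min_attained {T : ℕ} (hT : 1 ≤ T)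
    (ξ u w : Fin T → ℝ) (C ρ η s0 π σ : ℝ)
    (hu : ∀ t, 0 ≤ u t) (hw : ∀ t, 0 ≤ w t)
    (hC : 0 ≤ C) (hρ : 0 ≤ ρ) (hη0 : 0 ≤ η) (hη1 : η ≤ 1)
    (hs00 : 0 ≤ s0) (hs0C : s0 ≤ C)
    (hξ : ∀ t, 0 < ξ t) (hπ : 0 ≤ π) (hσ : 0 ≤ σ) :
    ∃ bstar rstar sstar : Fin T → ℝ,
      IndivFeasible u w C ρ η s0 bstar rstar sstar ∧
      ∀ b r s : Fin T → ℝ, IndivFeasible u w C ρ η s0 b r s →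
        indivObj ξ u w π σ bstar rstar ≤ indivObj ξ u w π σ b r := by
  let B : (Fin T → ℝ) → Fin T → ℝ := fun r t => max 0 (u t - w t + r t)
  let K : Set ((Fin T → ℝ) × (Fin T → ℝ)) :=
    {p | (∀ t, |p.1 t| ≤ ρ) ∧ StorageRec η s0 p.1 p.2 ∧ (∀ t, 0 ≤ p.2 t ∧ p.2 t ≤ C)}
  have hclosed : IsClosed {p : (Fin T → ℝ) × (Fin T → ℝ) | StorageRec η s0 p.1 p.2} := by
    unfold StorageRec
    simp only [Set.ofPred_forall]
    refine isClosed_iInter fun t => ?_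
    by_cases h : (t : ℕ) = 0
    · simp only [h, dite_true]
      exact isClosed_eq (by fun_prop) (by fun_prop)
    · simp only [h, dite_false]
      exact isClosed_eq (by fun_prop) (by fun_prop)
  have hKeq : K = (Set.Icc (fun _ => -ρ) (fun _ => ρ) ×ˢ Set.Icc (fun _ => 0) (fun _ => C)) ∩
      {p : (Fin T → ℝ) × (Fin T → ℝ) | StorageRec η s0 p.1 p.2} := by
    ext p
    simp only [K, Set.mem_ofPred_eq, Set.mem_inter_iff, Set.mem_prod, Set.mem_Icc, Pi.le_def,
      abs_le, forall_and]
    tauto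
  have hK : IsCompact K := by
    rw [hKeq]
    exact (isCompact_Icc.prod isCompact_Icc).inter_right hclosed
  have hne : K.Nonempty := by
    refine ⟨(fun _ => 0, fun t => (1 - η) ^ ((t : ℕ) + 1) * s0), ?_, ?_, ?_⟩
    · intro t
      simpa using hρ
    · intro t
      by_cases h : (t : ℕ) = 0
      · simp [h]
      · obtain ⟨k, hk⟩ := Nat.exists_eq_succ_of_ne_zero h
        simp only [h, dite_false]
        simp only [hk, Nat.succ_eq_add_one, Nat.add_sub_cancel]
        ring
    · intro t
      have h1 : 0 ≤ (1 - η) ^ ((t : ℕ) + 1) := pow_nonneg (by linarith) _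
      have h2 : (1 - η) ^ ((t : ℕ) + 1) ≤ 1 := pow_le_one₀ (by linarith) (by linarith)
      exact ⟨mul_nonneg h1 hs00, (mul_le_of_le_one_left hs00 h2).trans hs0C⟩
  have hcont : Continuous fun p : (Fin T → ℝ) × (Fin T → ℝ) =>
      indivObj ξ u w π σ (B p.1) p.1 := by
    unfold indivObj
    simp only [B]
    fun_prop
  obtain ⟨p, hp, hmin⟩ := hK.exists_isMinOn hne hcont.continuousOn
  refine ⟨B p.1, p.1, p.2, ⟨?_, ?_, hp⟩, ?_⟩
  · intro t
    have := le_max_right 0 (u t - w t + p.1 t)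
    simp only [B]
    linarith
  · intro t
    exact le_max_left _ _
  · rintro b r s ⟨h1, h2, h3⟩
    have hm : indivObj ξ u w π σ (B p.1) p.1 ≤ indivObj ξ u w π σ (B r) r :=
      hmin (show (r, s) ∈ K from h3)
    refine hm.trans ?_
    have hb : ∀ t, B r t ≤ b t := fun t => max_le (h2 t) (by linarith [h1 t])
    unfold indivObj
    have e1 : ∑ t, ξ t * B r t ≤ ∑ t, ξ t * b t :=
      Finset.sum_le_sum fun t _ => mul_le_mul_of_nonneg_left (hb t) (hξ t).le
    have e2 : σ * ∑ t, (B r t + w t - u t - r t) ≤ σ * ∑ t, (b t + w t - u t - r t) :=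
      mul_le_mul_of_nonneg_left (Finset.sum_le_sum fun t _ => by linarith [hb t]) hσ
    linarith
end

section
/- If the utility prices are strictly positive, ξ(t) > 0 for all t, and the energy-transfer price satisfies τ > 0, then the coalitional cost minimization problem attains its minimum: for any finite set G of households there exists a coalitionally feasible point whose coalitional objective value F_G equals c^ResEss(G), the infimum of F_G over all coalitionally feasible points. -/
open Finset

theorem coalTerm_nonneg {ι : Type*} {T : ℕ}
    (ξ : Fin T → ℝ) (u w : ι → Fin T → ℝ) (C ρ η s0 : ι → ℝ) (π σ τ : ℝ)
    (hξ : ∀ t, 0 < ξ t) (hπ : 0 ≤ π) (hσ : 0 ≤ σ) (hτ : 0 < τ)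
    (G : Finset ι) (b r s a : ι → Fin T → ℝ)
    (h : CoalFeasible u w C ρ η s0 G b r s a) (g : ι) (hg : g ∈ G) :
    0 ≤ ∑ t, ξ t * b g t ∧ 0 ≤ π * ∑ t, |r g t| ∧ 0 ≤ τ * ∑ t, |a g t| ∧
    0 ≤ σ * ∑ t, (b g t + w g t - u g t - a g t - r g t) := by
  obtain ⟨h1, h2, h3, h4, h5, h6⟩ := h
  refine ⟨Finset.sum_nonneg fun t _ => mul_nonneg (hξ t).le (h1 g hg t),
    mul_nonneg hπ (Finset.sum_nonneg fun t _ => abs_nonneg _),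
    mul_nonneg hτ.le (Finset.sum_nonneg fun t _ => abs_nonneg _),
    mul_nonneg hσ (Finset.sum_nonneg fun t _ => ?_)⟩
  have := h5 g hg t
  linarith

theorem coalTerm_le {ι : Type*} {T : ℕ}
    (ξ : Fin T → ℝ) (u w : ι → Fin T → ℝ) (C ρ η s0 : ι → ℝ) (π σ τ : ℝ)
    (hξ : ∀ t, 0 < ξ t) (hπ : 0 ≤ π) (hσ : 0 ≤ σ) (hτ : 0 < τ)
    (G : Finset ι) (b r s a : ι → Fin T → ℝ)
    (h : CoalFeasible u w C ρ η s0 G b r s a) (g : ι) (hg : g ∈ G) (t : Fin T) :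
    b g t ≤ coalObj ξ u w π σ τ G b r a / ξ t ∧
    |a g t| ≤ coalObj ξ u w π σ τ G b r a / τ := by
  have key := coalTerm_nonneg ξ u w C ρ η s0 π σ τ hξ hπ hσ hτ G b r s a h
  have h0 : (∑ t, ξ t * b g t + π * ∑ t, |r g t| + τ * ∑ t, |a g t|
    + σ * ∑ t, (b g t + w g t - u g t - a g t - r g t)) ≤ coalObj ξ u w π σ τ G b r a := by
    unfold coalObj
    refine Finset.single_le_sum (f := fun g => ∑ t, ξ t * b g t + π * ∑ t, |r g t|
      + τ * ∑ t, |a g t| + σ * ∑ t, (b g t + w g t - u g t - a g t - r g t)) ?_ hg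
    intro i hi
    obtain ⟨k1, k2, k3, k4⟩ := key i hi
    linarith
  obtain ⟨k1, k2, k3, k4⟩ := key g hg
  have hb : ξ t * b g t ≤ ∑ t, ξ t * b g t :=
    Finset.single_le_sum (f := fun t => ξ t * b g t)
      (fun t _ => mul_nonneg (hξ t).le (h.1 g hg t)) (Finset.mem_univ t)
  have ha : |a g t| ≤ ∑ t, |a g t| :=
    Finset.single_le_sum (f := fun t => |a g t|)
      (fun t _ => abs_nonneg _) (Finset.mem_univ t)
  have ha' := mul_le_mul_of_nonneg_left ha hτ.le
  constructor
  · rw [le_div_iff₀ (hξ t)]; linarith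
  · rw [le_div_iff₀ hτ]; linarith

theorem coal_exists_feasible {ι : Type*} {T : ℕ}
    (u w : ι → Fin T → ℝ) (C ρ η s0 : ι → ℝ)
    (hu : ∀ g t, 0 ≤ u g t) (hw : ∀ g t, 0 ≤ w g t)
    (hρ : ∀ g, 0 ≤ ρ g)
    (hη0 : ∀ g, 0 ≤ η g) (hη1 : ∀ g, η g ≤ 1)
    (hs00 : ∀ g, 0 ≤ s0 g) (hs0C : ∀ g, s0 g ≤ C g)
    (G : Finset ι) :
    CoalFeasible u w C ρ η s0 G u (fun _ _ => 0)
      (fun g t => (1 - η g) ^ ((t : ℕ) + 1) * s0 g) (fun _ _ => 0) := by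
  refine ⟨fun g _ t => hu g t, fun g _ t => by simpa using hρ g, ?_, ?_, ?_, by simp⟩
  · intro g _ t
    dsimp only
    split_ifs with h
    · simp [h]
    · have : (t : ℕ) - 1 + 1 = t := by omega
      rw [this]; ring
  · intro g _ t
    have h1 : 0 ≤ 1 - η g := by linarith [hη1 g]
    have h2 : (1 - η g) ^ ((t : ℕ) + 1) ≤ 1 := pow_le_one₀ h1 (by linarith [hη0 g])
    refine ⟨mul_nonneg (pow_nonneg h1 _) (hs00 g), ?_⟩
    have := mul_le_mul_of_nonneg_right h2 (hs00 g)
    have := hs0C g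
    dsimp only
    linarith
  · intro g _ t
    have := hw g t
    dsimp only
    linarith

theorem coal_isClosed {ι : Type*} {T : ℕ}
    (u w : ι → Fin T → ℝ) (C ρ η s0 : ι → ℝ) (G : Finset ι) :
    IsClosed {p : (ι → Fin T → ℝ) × (ι → Fin T → ℝ) × (ι → Fin T → ℝ) × (ι → Fin T → ℝ) |
      CoalFeasible u w C ρ η s0 G p.1 p.2.1 p.2.2.1 p.2.2.2} := by
  unfold CoalFeasible StorageRec
  simp only [Set.ofPred_and, Set.ofPred_forall]
  refine IsClosed.inter ?_ (IsClosed.inter ?_ (IsClosed.inter ?_ (IsClosed.inter ?_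
    (IsClosed.inter ?_ ?_))))
  · exact isClosed_iInter fun g => isClosed_iInter fun _ => isClosed_iInter fun t =>
      isClosed_le (by fun_prop) (by fun_prop)
  · exact isClosed_iInter fun g => isClosed_iInter fun _ => isClosed_iInter fun t =>
      isClosed_le (by fun_prop) (by fun_prop)
  · refine isClosed_iInter fun g => isClosed_iInter fun _ => isClosed_iInter fun t => ?_
    split_ifs with h
    · exact isClosed_eq (by fun_prop) (by fun_prop)
    · exact isClosed_eq (by fun_prop) (by fun_prop)
  · exact isClosed_iInter fun g => isClosed_iInter fun _ => isClosed_iInter fun t =>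
      (isClosed_le (by fun_prop) (by fun_prop)).inter (isClosed_le (by fun_prop) (by fun_prop))
  · exact isClosed_iInter fun g => isClosed_iInter fun _ => isClosed_iInter fun t =>
      isClosed_le (by fun_prop) (by fun_prop)
  · exact isClosed_iInter fun t => isClosed_eq (by fun_prop) (by fun_prop)

open Classical in
theorem coal_trunc {ι : Type*} {T : ℕ}
    (ξ : Fin T → ℝ) (u w : ι → Fin T → ℝ) (C ρ η s0 : ι → ℝ) (π σ τ : ℝ)
    (hC : ∀ g, 0 ≤ C g) (hρ : ∀ g, 0 ≤ ρ g)
    (hξ : ∀ t, 0 < ξ t) (hπ : 0 ≤ π) (hσ : 0 ≤ σ) (hτ : 0 < τ)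
    (G : Finset ι) (F : ℝ) (hF : 0 ≤ F) (b r s a : ι → Fin T → ℝ)
    (h : CoalFeasible u w C ρ η s0 G b r s a) (hle : coalObj ξ u w π σ τ G b r a ≤ F) :
    ∃ b' r' s' a' : ι → Fin T → ℝ, CoalFeasible u w C ρ η s0 G b' r' s' a' ∧
      coalObj ξ u w π σ τ G b' r' a' = coalObj ξ u w π σ τ G b r a ∧
      (b' ∈ Set.Icc (fun _ _ => 0) (fun _ t => F / ξ t)) ∧
      (r' ∈ Set.Icc (fun g _ => - ρ g) (fun g _ => ρ g)) ∧
      (s' ∈ Set.Icc (fun _ _ => 0) (fun g _ => C g)) ∧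
      (a' ∈ Set.Icc (fun _ _ => - (F / τ)) (fun _ _ => F / τ)) := by
  have hb := coalTerm_le ξ u w C ρ η s0 π σ τ hξ hπ hσ hτ G b r s a h
  have hF1 : 0 ≤ F / τ := div_nonneg hF hτ.le
  have hF2 : ∀ t, 0 ≤ F / ξ t := fun t => div_nonneg hF (hξ t).le
  have hb1 : ∀ g ∈ G, ∀ t, b g t ≤ F / ξ t := fun g hg t =>
    (hb g hg t).1.trans (div_le_div_of_nonneg_right hle (hξ t).le)
  have hb2 : ∀ g ∈ G, ∀ t, |a g t| ≤ F / τ := fun g hg t =>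
    (hb g hg t).2.trans (div_le_div_of_nonneg_right hle hτ.le)
  obtain ⟨h1, h2, h3, h4, h5, h6⟩ := h
  refine ⟨fun g t => if g ∈ G then b g t else 0, fun g t => if g ∈ G then r g t else 0,
    fun g t => if g ∈ G then s g t else 0, fun g t => if g ∈ G then a g t else 0,
    ⟨?_, ?_, ?_, ?_, ?_, ?_⟩, ?_, ⟨?_, ?_⟩, ⟨?_, ?_⟩, ⟨?_, ?_⟩, ⟨?_, ?_⟩⟩
  · intro g hg; simpa [hg] using h1 g hg
  · intro g hg; simpa [hg] using h2 g hg
  · intro g hg; simpa [hg] using h3 g hg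
  · intro g hg; simpa [hg] using h4 g hg
  · intro g hg; simpa [hg] using h5 g hg
  · intro t
    rw [← h6 t]
    exact Finset.sum_congr rfl fun g hg => by simp [hg]
  · unfold coalObj
    exact Finset.sum_congr rfl fun g hg => by simp [hg]
  all_goals
    intro g t
    dsimp only
    split_ifs with hg
  · exact h1 g hg t
  · exact le_rfl
  · exact hb1 g hg t
  · exact hF2 t
  · exact (abs_le.1 (h2 g hg t)).1
  · linarith [hρ g]
  · exact (abs_le.1 (h2 g hg t)).2
  · exact hρ g
  · exact (h4 g hg t).1
  · exact le_rfl
  · exact (h4 g hg t).2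
  · exact hC g
  · exact (abs_le.1 (hb2 g hg t)).1
  · linarith
  · exact (abs_le.1 (hb2 g hg t)).2
  · exact hF1

/-- With strictly positive utility prices and a strictly positive energy-transfer
price, the coalitional cost minimization problem attains its minimum. -/
theorem coal_min_attained {ι : Type*} {T : ℕ} (hT : 1 ≤ T)
    (ξ : Fin T → ℝ) (u w : ι → Fin T → ℝ) (C ρ η s0 : ι → ℝ) (π σ τ : ℝ)
    (hu : ∀ g t, 0 ≤ u g t) (hw : ∀ g t, 0 ≤ w g t)
    (hC : ∀ g, 0 ≤ C g) (hρ : ∀ g, 0 ≤ ρ g)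
    (hη0 : ∀ g, 0 ≤ η g) (hη1 : ∀ g, η g ≤ 1)
    (hs00 : ∀ g, 0 ≤ s0 g) (hs0C : ∀ g, s0 g ≤ C g)
    (hξ : ∀ t, 0 < ξ t) (hπ : 0 ≤ π) (hσ : 0 ≤ σ) (hτ : 0 < τ)
    (G : Finset ι) :
    ∃ b r s a : ι → Fin T → ℝ,
      CoalFeasible u w C ρ η s0 G b r s a ∧
      coalObj ξ u w π σ τ G b r a = coalCost ξ u w C ρ η s0 π σ τ G := by
  have hfeas := coal_exists_feasible u w C ρ η s0 hu hw hρ hη0 hη1 hs00 hs0C G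
  obtain ⟨F, hFdef⟩ : ∃ F, F = coalObj ξ u w π σ τ G u (fun _ _ => 0) (fun _ _ => 0) := ⟨_, rfl⟩
  have hnn : ∀ b r s a, CoalFeasible u w C ρ η s0 G b r s a →
      0 ≤ coalObj ξ u w π σ τ G b r a := by
    intro b r s a h
    refine Finset.sum_nonneg fun g hg => ?_
    obtain ⟨k1, k2, k3, k4⟩ :=
      coalTerm_nonneg ξ u w C ρ η s0 π σ τ hξ hπ hσ hτ G b r s a h g hg
    linarith
  have hF : 0 ≤ F := hFdef ▸ hnn _ _ _ _ hfeas
  have htr := coal_trunc ξ u w C ρ η s0 π σ τ hC hρ hξ hπ hσ hτ G F hF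
  let K : Set ((ι → Fin T → ℝ) × (ι → Fin T → ℝ) × (ι → Fin T → ℝ) × (ι → Fin T → ℝ)) :=
    (Set.Icc (fun _ _ => 0) (fun _ t => F / ξ t)) ×ˢ
    (Set.Icc (fun g _ => - ρ g) (fun g _ => ρ g)) ×ˢ
    (Set.Icc (fun _ _ => 0) (fun g _ => C g)) ×ˢ
    (Set.Icc (fun _ _ => - (F / τ)) (fun _ _ => F / τ))
  have hK : IsCompact K :=
    isCompact_Icc.prod (isCompact_Icc.prod (isCompact_Icc.prod isCompact_Icc))
  have hK' := hK.inter_right (coal_isClosed u w C ρ η s0 G)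
  have hcont : Continuous fun p : (ι → Fin T → ℝ) × (ι → Fin T → ℝ) × (ι → Fin T → ℝ) ×
      (ι → Fin T → ℝ) => coalObj ξ u w π σ τ G p.1 p.2.1 p.2.2.2 := by
    unfold coalObj
    fun_prop
  obtain ⟨b0, r0, s0', a0, hf0, he0, m1, m2, m3, m4⟩ := htr _ _ _ _ hfeas hFdef.ge
  have hmem0 : (b0, r0, s0', a0) ∈ K ∩ {p | CoalFeasible u w C ρ η s0 G p.1 p.2.1 p.2.2.1 p.2.2.2} :=
    ⟨⟨m1, m2, m3, m4⟩, hf0⟩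
  obtain ⟨⟨b, r, s, a⟩, ⟨-, hfp⟩, hmin⟩ := hK'.exists_isMinOn ⟨_, hmem0⟩ hcont.continuousOn
  refine ⟨b, r, s, a, hfp, ?_⟩
  have hle : IsLeast {c : ℝ | ∃ b r s a : ι → Fin T → ℝ,
      CoalFeasible u w C ρ η s0 G b r s a ∧ coalObj ξ u w π σ τ G b r a = c}
      (coalObj ξ u w π σ τ G b r a) := by
    refine ⟨⟨b, r, s, a, hfp, rfl⟩, ?_⟩
    rintro c ⟨b1, r1, s1, a1, hf1, rfl⟩
    by_cases hc : coalObj ξ u w π σ τ G b1 r1 a1 ≤ F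
    · obtain ⟨b2, r2, s2, a2, hf2, he2, n1, n2, n3, n4⟩ := htr _ _ _ _ hf1 hc
      rw [← he2]
      exact isMinOn_iff.1 hmin (b2, r2, s2, a2) ⟨⟨n1, n2, n3, n4⟩, hf2⟩
    · have h1 := isMinOn_iff.1 hmin _ hmem0
      dsimp only at h1
      rw [he0, ← hFdef] at h1
      exact h1.trans (not_le.1 hc).le
  exact hle.csInf_eq.symm
end
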